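/- Let m ≥ 1 and let R be a commutative ring in which (m−1)! is invertible. If A ∈ Mat_m(R) has characteristic polynomial X^m, then log(exp(A)) = A, where exp and log denote the truncated exponential and logarithm. -/

import Mathlib

/-!
Let `E` and `L` be the polynomials defining the truncated exponential and logarithm. Then
`E' ≡ E (mod X ^ (m - 1))` and `X * L' = 1 - (1 - X) ^ (m - 1)`. Since `X ∣ E - 1`, the chain rule
gives `(L ∘ E)' ≡ 1 (mod X ^ (m - 1))`. Integrating only divides by `1, …, m - 1`, which are units,
so `L ∘ E ≡ X (mod X ^ m)`. By Cayley–Hamilton `A ^ m = 0`, and evaluating at `A` gives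
`log (exp A) = A`.
-/

open Polynomial

/-- The truncated exponential of a matrix: `exp(A) = ∑_{i=0}^{m-1} A^i / i!`. -/
noncomputable def truncExp {R : Type*} [CommRing R] {m : ℕ}
    (A : Matrix (Fin m) (Fin m) R) : Matrix (Fin m) (Fin m) R :=
  ∑ i ∈ Finset.range m, (Ring.inverse ((i.factorial : R))) • A ^ i

/-- The truncated logarithm of a matrix: `log(B) = ∑_{i=1}^{m-1} (-1)^{i+1} (B-1)^i / i`. -/
noncomputable def truncLog {R : Type*} [CommRing R] {m : ℕ}
    (B : Matrix (Fin m) (Fin m) R) : Matrix (Fin m) (Fin m) R :=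
  ∑ i ∈ Finset.Ico 1 m, ((-1 : R) ^ (i + 1) * Ring.inverse ((i : R))) • (B - 1) ^ i

section Factorial

variable {R : Type*} [CommSemiring R]

lemma isUnit_natCast_of_isUnit_factorial {k n : ℕ} (hk : IsUnit (k.factorial : R))
    (hn : 0 < n) (hnk : n ≤ k) : IsUnit (n : R) :=
  isUnit_of_dvd_unit (Nat.cast_dvd_cast (Nat.dvd_factorial hn hnk)) hk

lemma inverse_factorial_succ_mul {n : ℕ} (hn : IsUnit ((n + 1 : ℕ) : R)) :
    Ring.inverse ((n + 1).factorial : R) * ((n + 1 : ℕ) : R) = Ring.inverse (n.factorial : R) := by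
  rw [Nat.factorial_succ, Nat.cast_mul, Ring.mul_inverse_rev, mul_assoc,
    Ring.inverse_mul_cancel _ hn, mul_one]

lemma X_pow_succ_dvd_of_X_pow_dvd_derivative {k : ℕ} (hk : IsUnit (k.factorial : R)) {p : R[X]}
    (hp₀ : p.coeff 0 = 0) (hp : X ^ k ∣ derivative p) : X ^ (k + 1) ∣ p := by
  rw [X_pow_dvd_iff] at hp ⊢
  rintro (_ | d) hd
  · exact hp₀
  · have hdk : d < k := Nat.lt_of_succ_lt_succ hd
    have hunit : IsUnit ((d : R) + 1) := by
      exact_mod_cast isUnit_natCast_of_isUnit_factorial hk d.succ_pos hdk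
    have hcoeff : p.coeff (d + 1) * ((d : R) + 1) = 0 := by
      rw [← coeff_derivative, hp d hdk]
    exact hunit.mul_left_eq_zero.mp hcoeff

end Factorial

/-- The polynomial `∑_{i < m} X ^ i / i!` whose value at a matrix of size `m` is its truncated
exponential. -/
noncomputable def truncExpPoly (R : Type*) [CommRing R] (m : ℕ) : R[X] :=
  ∑ i ∈ Finset.range m, C (Ring.inverse (i.factorial : R)) * X ^ i

/-- The polynomial `∑_{1 ≤ i < m} (-1) ^ (i + 1) (X - 1) ^ i / i` whose value at a matrix of size
`m` is its truncated logarithm. The variable is the argument of the logarithm, so the expansion is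
around `1`. -/
noncomputable def truncLogPoly (R : Type*) [CommRing R] (m : ℕ) : R[X] :=
  ∑ i ∈ Finset.Ico 1 m, C ((-1) ^ (i + 1) * Ring.inverse (i : R)) * (X - 1) ^ i

section TruncPoly

variable {R : Type*} [CommRing R]

lemma truncExp_eq_aeval {m : ℕ} (A : Matrix (Fin m) (Fin m) R) :
    truncExp A = aeval A (truncExpPoly R m) := by
  simp [truncExp, truncExpPoly, Algebra.smul_def]

lemma truncLog_eq_aeval {m : ℕ} (B : Matrix (Fin m) (Fin m) R) :
    truncLog B = aeval B (truncLogPoly R m) := by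
  simp [truncLog, truncLogPoly, Algebra.smul_def]

lemma truncExpPoly_succ (k : ℕ) :
    truncExpPoly R (k + 1) = truncExpPoly R k + C (Ring.inverse (k.factorial : R)) * X ^ k :=
  Finset.sum_range_succ _ _

lemma eval_zero_truncExpPoly_succ (k : ℕ) : (truncExpPoly R (k + 1)).eval 0 = 1 := by
  simp [truncExpPoly, eval_finsetSum, Finset.sum_range_succ']

lemma eval_one_truncLogPoly (m : ℕ) : (truncLogPoly R m).eval 1 = 0 := by
  rw [truncLogPoly, eval_finsetSum]
  refine Finset.sum_eq_zero fun i hi => ?_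
  have hi₀ : i ≠ 0 := Nat.one_le_iff_ne_zero.mp (Finset.mem_Ico.mp hi).1
  simp [hi₀]

lemma X_dvd_one_sub_truncExpPoly_succ (k : ℕ) : X ∣ 1 - truncExpPoly R (k + 1) := by
  rw [X_dvd_iff, coeff_zero_eq_eval_zero, eval_sub, eval_one, eval_zero_truncExpPoly_succ, sub_self]

lemma derivative_truncExpPoly_succ {k : ℕ} (hk : IsUnit (k.factorial : R)) :
    derivative (truncExpPoly R (k + 1)) = truncExpPoly R k := by
  rw [truncExpPoly, Finset.sum_range_succ', derivative_add, derivative_sum, pow_zero, mul_one,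
    derivative_C, add_zero, truncExpPoly]
  refine Finset.sum_congr rfl fun i hi => ?_
  have hunit : IsUnit ((i + 1 : ℕ) : R) :=
    isUnit_natCast_of_isUnit_factorial hk i.succ_pos (Finset.mem_range.mp hi)
  rw [derivative_C_mul_X_pow, inverse_factorial_succ_mul hunit, Nat.add_sub_cancel]

lemma derivative_truncLogPoly_succ {k : ℕ} (hk : IsUnit (k.factorial : R)) :
    derivative (truncLogPoly R (k + 1)) = ∑ i ∈ Finset.range k, (1 - X) ^ i := by
  rw [truncLogPoly, Finset.sum_Ico_eq_sum_range, Nat.add_sub_cancel, derivative_sum]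
  refine Finset.sum_congr rfl fun i hi => ?_
  have hunit : IsUnit ((1 + i : ℕ) : R) :=
    isUnit_natCast_of_isUnit_factorial hk (by lia) (by simpa [add_comm] using hi)
  calc derivative (C ((-1) ^ (1 + i + 1) * Ring.inverse ((1 + i : ℕ) : R)) * (X - 1) ^ (1 + i))
      = C ((-1) ^ (1 + i + 1) * (Ring.inverse ((1 + i : ℕ) : R) * ((1 + i : ℕ) : R))) *
          (X - 1) ^ i := by
        rw [derivative_C_mul, derivative_pow, Nat.add_sub_cancel_left, derivative_sub, derivative_X,
          derivative_one, sub_zero, mul_one, ← mul_assoc, ← C_mul, mul_assoc]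
    _ = (-1) ^ i * (X - 1) ^ i := by
        rw [Ring.inverse_mul_cancel _ hunit, mul_one, C_pow, C_neg, C_1]
        ring
    _ = (1 - X) ^ i := by rw [← mul_pow, neg_one_mul, neg_sub]

lemma X_mul_derivative_truncLogPoly_succ {k : ℕ} (hk : IsUnit (k.factorial : R)) :
    X * derivative (truncLogPoly R (k + 1)) = 1 - (1 - X) ^ k := by
  rw [derivative_truncLogPoly_succ hk, ← mul_neg_geom_sum, sub_sub_cancel]

lemma X_pow_dvd_derivative_truncLogPoly_comp_truncExpPoly_sub_one {k : ℕ}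
    (hk : IsUnit (k.factorial : R)) :
    X ^ k ∣ derivative ((truncLogPoly R (k + 1)).comp (truncExpPoly R (k + 1))) - 1 := by
  set E := truncExpPoly R (k + 1)
  set D := (derivative (truncLogPoly R (k + 1))).comp E
  set c := Ring.inverse (k.factorial : R)
  have hE' : derivative E = E - C c * X ^ k := by
    rw [derivative_truncExpPoly_succ hk, eq_sub_iff_add_eq, ← truncExpPoly_succ]
  have hED : E * D = 1 - (1 - E) ^ k := by
    simpa using congrArg (fun p => p.comp E) (X_mul_derivative_truncLogPoly_succ hk)
  have hderiv : derivative ((truncLogPoly R (k + 1)).comp E) - 1 =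
      -((1 - E) ^ k + X ^ k * (C c * D)) := by
    rw [derivative_comp, hE']
    linear_combination hED
  rw [hderiv, dvd_neg]
  exact dvd_add (pow_dvd_pow_of_dvd (X_dvd_one_sub_truncExpPoly_succ k) k) (dvd_mul_right _ _)

lemma X_pow_succ_dvd_truncLogPoly_comp_truncExpPoly_sub_X {k : ℕ}
    (hk : IsUnit (k.factorial : R)) :
    X ^ (k + 1) ∣ (truncLogPoly R (k + 1)).comp (truncExpPoly R (k + 1)) - X := by
  apply X_pow_succ_dvd_of_X_pow_dvd_derivative hk
  · rw [coeff_zero_eq_eval_zero, eval_sub, eval_comp, eval_zero_truncExpPoly_succ,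
      eval_one_truncLogPoly, eval_X, sub_self]
  · rw [derivative_sub, derivative_X]
    exact X_pow_dvd_derivative_truncLogPoly_comp_truncExpPoly_sub_one hk

theorem truncLog_truncExp_general {S : Type*} [Ring S] [Algebra R S] {k : ℕ}
    (hk : IsUnit (k.factorial : R)) {a : S} (ha : a ^ (k + 1) = 0) :
    aeval (aeval a (truncExpPoly R (k + 1))) (truncLogPoly R (k + 1)) = a := by
  obtain ⟨q, hq⟩ := X_pow_succ_dvd_truncLogPoly_comp_truncExpPoly_sub_X hk
  rw [← aeval_comp, ← sub_eq_zero]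
  simpa [ha] using congrArg (aeval a) hq

end TruncPoly

lemma pow_eq_zero_of_charpoly_eq_X_pow {R n : Type*} [CommRing R] [Fintype n] [DecidableEq n]
    {A : Matrix n n R} {m : ℕ} (hA : A.charpoly = X ^ m) : A ^ m = 0 := by
  simpa [hA] using A.aeval_self_charpoly

/-- Let `m ≥ 1` and let `R` be a commutative ring in which `(m−1)!` is invertible.
If `A ∈ Mat_m(R)` has characteristic polynomial `X^m`, then `log(exp(A)) = A`, where
`exp` and `log` denote the truncated exponential and logarithm. -/
theorem truncLog_truncExp {R : Type*} [CommRing R] {m : ℕ} (hm : 1 ≤ m)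
    (hfac : IsUnit (((m - 1).factorial : R)))
    (A : Matrix (Fin m) (Fin m) R) (hA : A.charpoly = X ^ m) :
    truncLog (truncExp A) = A := by
  obtain ⟨k, rfl⟩ := Nat.exists_eq_add_of_le' hm
  rw [truncExp_eq_aeval, truncLog_eq_aeval]
  exact truncLog_truncExp_general hfac (pow_eq_zero_of_charpoly_eq_X_pow hA)
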